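/- Let ℚ be a quasi-tree of an oriented ribbon graph 𝔾 and let C be the sub-chord-diagram of C_ℚ consisting of chords corresponding to edges of ℚ. Then the genus of ℚ equals half the rank over 𝔽₂ of the adjacency matrix of the intersection graph of C. -/

import Mathlib

open Equiv

abbrev HalfEdge (n : ℕ) := Fin n × Bool

/-- The permutation of half-edges that flips the two half-edges of each edge in `H`. -/
def flipOn (n : ℕ) (H : Finset (Fin n)) : Equiv.Perm (HalfEdge n) :=
  Function.Involutive.toPerm
    (fun p => if p.1 ∈ H then (p.1, !p.2) else p)
    (by intro p; by_cases h : p.1 ∈ H <;> simp [h])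

/-- Number of orbits (cycles) of a permutation. -/
noncomputable def orbitCount {α : Type*} (σ : Equiv.Perm α) : ℕ :=
  Nat.card (MulAction.orbitRel.Quotient (Subgroup.zpowers σ) α)

/-- Number of faces of the spanning ribbon subgraph with edge set `H` of the ribbon
graph with vertex permutation `σ₀`. -/
noncomputable def faceCount {n : ℕ} (σ₀ : Equiv.Perm (HalfEdge n)) (H : Finset (Fin n)) : ℕ :=
  orbitCount (σ₀ * flipOn n H)

/-- Chords `i` and `j` of the chord diagram `C_ℚ` of a quasi-tree `ℚ` intersect iff the
boundary of `ℚ ∆ {i, j}` is a single curve (unzipping along one disconnects, along the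
other reconnects). -/
def chordsIntersect {n : ℕ} (σ₀ : Equiv.Perm (HalfEdge n)) (Q : Finset (Fin n))
    (i j : Fin n) : Prop :=
  i ≠ j ∧ faceCount σ₀ (symmDiff Q {i, j}) = 1

/-- The adjacency matrix over `𝔽₂` of the intersection graph of the sub-chord diagram of
`C_ℚ` consisting of the chords corresponding to edges of `ℚ`. -/
noncomputable def intersectionMatrix {n : ℕ} (σ₀ : Equiv.Perm (HalfEdge n))
    (Q : Finset (Fin n)) : Matrix Q Q (ZMod 2) :=
  fun i j =>
    if (i : Fin n) ≠ (j : Fin n) ∧ faceCount σ₀ (symmDiff Q {(i : Fin n), (j : Fin n)}) = 1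
    then 1 else 0

/-! Let `σ` traverse the single boundary curve of `ℚ`, and let `c` be its chord diagram. A function
on the ends of the chords is constant on the orbits of `σ * chordFlip c` precisely when it jumps
along `σ`, at the ends of each chord, by the difference of its values there. Such a function is a
constant plus a combination of potentials `g i`, each jumping only at the ends of chord `i`, and
consistency of the coefficients says that they are fixed by the matrix `P` recording how each
potential changes across each chord. So the number of orbits of `σ * chordFlip c` is one more than
the corank of `P - 1`. For one chord, the signs of permutations force the diagonal of `P` to be `1`;
for two chords `i`, `j` the count is `1` if and only if `P i j ≠ 0`, so `P - 1` is the intersection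
matrix over `𝔽₂`. For all chords in `ℚ`, undoing the flips gives back the vertex permutation. -/

theorem finrank_map_add_finrank_inf_ker {K V W : Type*} [DivisionRing K] [AddCommGroup V]
    [Module K V] [FiniteDimensional K V] [AddCommGroup W] [Module K W] (p : Submodule K V)
    (f : V →ₗ[K] W) :
    Module.finrank K (p.map f) + Module.finrank K (p ⊓ LinearMap.ker f : Submodule K V) =
      Module.finrank K p := by
  rw [← LinearMap.finrank_range_add_finrank_ker (f.domRestrict p), LinearMap.range_domRestrict,
    LinearMap.ker_domRestrict, ← Submodule.map_comap_subtype, Submodule.finrank_map_subtype_eq]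

section Coboundary

variable {α : Type*} (R : Type*) [CommRing R]

/-- The coboundary `f ↦ f ∘ σ - f` of functions along a permutation; its kernel consists of the
functions constant on the orbits of `σ`. -/
def coboundary (σ : Perm α) : (α → R) →ₗ[R] (α → R) :=
  LinearMap.funLeft R R σ - LinearMap.id

variable {R}

theorem coboundary_apply (σ : Perm α) (f : α → R) (x : α) :
    coboundary R σ f x = f (σ x) - f x :=
  rfl

theorem mem_ker_coboundary {σ : Perm α} {f : α → R} :
    f ∈ LinearMap.ker (coboundary R σ) ↔ ∀ x, f (σ x) = f x := by
  simp only [LinearMap.mem_ker, funext_iff, coboundary_apply, Pi.zero_apply, sub_eq_zero]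

theorem sum_coboundary [Fintype α] (σ : Perm α) (f : α → R) :
    ∑ x, coboundary R σ f x = 0 := by
  simp only [coboundary_apply, Finset.sum_sub_distrib, Equiv.sum_comp σ f, sub_self]

theorem coboundary_mul (σ : Perm α) (f g : α → R) :
    coboundary R σ (f * g) = coboundary R σ f * g + f * coboundary R σ g +
      coboundary R σ f * coboundary R σ g := by
  ext x
  simp only [Pi.add_apply, Pi.mul_apply, coboundary_apply]
  ring

theorem apply_zpow_of_mem_ker_coboundary {σ : Perm α} {f : α → R}
    (hf : f ∈ LinearMap.ker (coboundary R σ)) (k : ℤ) (x : α) : f ((σ ^ k) x) = f x := by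
  have hf' := mem_ker_coboundary.1 hf
  induction k generalizing x with
  | zero => rfl
  | succ k ih => rw [zpow_add_one, Perm.mul_apply, ih, hf']
  | pred k ih =>
    rw [zpow_sub_one, Perm.mul_apply, ih, ← hf', Perm.inv_def, apply_symm_apply]

theorem range_funLeft_orbit (σ : Perm α) :
    LinearMap.range (LinearMap.funLeft R R
      (Quotient.mk'' : α → MulAction.orbitRel.Quotient (Subgroup.zpowers σ) α)) =
      LinearMap.ker (coboundary R σ) := by
  ext f
  constructor
  · rintro ⟨g, rfl⟩
    refine mem_ker_coboundary.2 fun x => congrArg g (Quotient.sound ?_)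
    exact ⟨⟨σ, Subgroup.mem_zpowers σ⟩, rfl⟩
  · intro hf
    refine ⟨fun q => Quotient.liftOn' q f ?_, rfl⟩
    rintro _ x ⟨⟨_, k, rfl⟩, rfl⟩
    exact apply_zpow_of_mem_ker_coboundary hf k x

variable (R) in
theorem finrank_ker_coboundary [Nontrivial R] [Finite α] (σ : Perm α) :
    Module.finrank R (LinearMap.ker (coboundary R σ)) = orbitCount σ := by
  have : Finite (MulAction.orbitRel.Quotient (Subgroup.zpowers σ) α) := Quotient.finite _
  have := Fintype.ofFinite (MulAction.orbitRel.Quotient (Subgroup.zpowers σ) α)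
  rw [← range_funLeft_orbit, LinearMap.finrank_range_of_inj
    (LinearMap.funLeft_injective_of_surjective R R _ Quotient.mk''_surjective),
    Module.finrank_fintype_fun_eq_card, orbitCount, Nat.card_eq_fintype_card]

end Coboundary

section SingleOrbit

variable {α : Type*} {σ : Perm α}

theorem nonempty_of_orbitCount_eq_one (hσ : orbitCount σ = 1) : Nonempty α :=
  (Nat.card_eq_one_iff_unique.1 hσ).2.elim fun q => ⟨q.out⟩

theorem sameCycle_of_orbitCount_eq_one (hσ : orbitCount σ = 1) (x y : α) : σ.SameCycle x y := by
  have hsub : Subsingleton (MulAction.orbitRel.Quotient (Subgroup.zpowers σ) α) :=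
    (Nat.card_eq_one_iff_unique.1 hσ).1
  obtain ⟨⟨_, k, rfl⟩, hk⟩ := Quotient.eq''.1 (hsub.elim (Quotient.mk'' y) (Quotient.mk'' x))
  exact ⟨k, hk⟩

theorem sign_of_orbitCount_eq_one [Fintype α] [DecidableEq α] [Nontrivial α]
    (hσ : orbitCount σ = 1) : Perm.sign σ = -(-1) ^ Fintype.card α := by
  have hOn : σ.IsCycleOn Set.univ :=
    ⟨Set.bijOn_univ.2 σ.bijective, fun x _ y _ => sameCycle_of_orbitCount_eq_one hσ x y⟩
  have hcycle : σ.IsCycle := Perm.isCycle_iff_exists_isCycleOn.2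
    ⟨Set.univ, Set.nontrivial_univ, hOn, fun x _ => Set.mem_univ x⟩
  have hsupport : σ.support = Finset.univ := Finset.eq_univ_iff_forall.2 fun x =>
    Perm.mem_support.2 (hOn.apply_ne Set.nontrivial_univ (Set.mem_univ x))
  rw [hcycle.sign, hsupport, Finset.card_univ]

theorem eq_of_mem_ker_coboundary {R : Type*} [CommRing R] (hσ : orbitCount σ = 1) {f : α → R}
    (hf : f ∈ LinearMap.ker (coboundary R σ)) (x y : α) : f x = f y := by
  obtain ⟨k, rfl⟩ := sameCycle_of_orbitCount_eq_one hσ x y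
  exact (apply_zpow_of_mem_ker_coboundary hf k x).symm

theorem exists_coboundary_eq {K : Type*} [Field K] [Fintype α] (hσ : orbitCount σ = 1)
    {h : α → K} (hh : ∑ x, h x = 0) : ∃ g, coboundary K σ g = h := by
  classical
  obtain ⟨a⟩ := nonempty_of_orbitCount_eq_one hσ
  let total : Module.Dual K (α → K) := ∑ x, LinearMap.proj x
  have total_apply (f : α → K) : total f = ∑ x, f x := by simp [total]
  have total_ne : total ≠ 0 := fun h0 => by
    simpa [total_apply] using LinearMap.congr_fun h0 (Pi.single a 1)
  have hle : LinearMap.range (coboundary K σ) ≤ LinearMap.ker total := by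
    rintro _ ⟨f, rfl⟩
    rw [LinearMap.mem_ker, total_apply, sum_coboundary]
  have hrange := LinearMap.finrank_range_add_finrank_ker (coboundary K σ)
  have hker := Module.Dual.finrank_ker_add_one_of_ne_zero total_ne
  rw [finrank_ker_coboundary, hσ] at hrange
  have heq := Submodule.eq_of_le_of_finrank_eq hle (by lia)
  rw [← LinearMap.mem_range, heq, LinearMap.mem_ker, total_apply, hh]

end SingleOrbit

section ChordDiagram

variable {α ι κ : Type*} (R : Type*) [CommRing R]

/-- The sub-chord-diagram of `c` whose chords are those indexed by `e`. A family of disjoint chords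
is encoded by the embedding `c` of its ends, chord `i` joining `c (i, false)` to `c (i, true)`. -/
def subdiagram (c : ι × Bool ↪ α) (e : κ ↪ ι) : κ × Bool ↪ α :=
  (e.prodMap (.refl Bool)).trans c

/-- The difference of the values of a function at the two ends of each chord. -/
def chordDifference (c : ι × Bool ↪ α) : (α → R) →ₗ[R] (ι → R) :=
  LinearMap.funLeft R R (fun i => c (i, true)) - LinearMap.funLeft R R (fun i => c (i, false))

variable {R}

/-- The matrix whose entry `(i, j)` is the change across chord `i` of a potential of chord `j`. Off
the diagonal, it is the signed intersection number of the two chords. -/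
def crossingMatrix (c : ι × Bool ↪ α) (g : ι → α → R) : Matrix ι ι R :=
  .of fun i j => chordDifference R c (g j) i

theorem crossingMatrix_subdiagram (c : ι × Bool ↪ α) (g : ι → α → R) (e : κ ↪ ι) :
    crossingMatrix (subdiagram c e) (g ∘ e) = (crossingMatrix c g).submatrix e e :=
  rfl

theorem chordDifference_linearCombination [Fintype ι] (c : ι × Bool ↪ α) (g : ι → α → R)
    (v : ι → R) :
    chordDifference R c (Fintype.linearCombination R g v) = (crossingMatrix c g).mulVec v := by
  ext i
  simp [Fintype.linearCombination_apply, crossingMatrix, Matrix.mulVec, dotProduct, mul_comm]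

theorem chordDifference_eq_zero {σ : Perm α} (hσ : orbitCount σ = 1) (c : ι × Bool ↪ α)
    {f : α → R} (hf : f ∈ LinearMap.ker (coboundary R σ)) : chordDifference R c f = 0 := by
  ext i
  exact sub_eq_zero.2 (eq_of_mem_ker_coboundary hσ hf _ _)

variable [DecidableEq α]

/-- The involution exchanging the two ends of every chord. -/
def chordFlip [Fintype ι] (c : ι × Bool ↪ α) : Perm α :=
  Perm.viaFintypeEmbedding (prodCongrRight fun _ : ι => boolNot) c

variable (R) in
/-- The boundary of chord `i`, oriented from `c (i, true)` to `c (i, false)`. -/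
def chordBoundary (c : ι × Bool ↪ α) (i : ι) : α → R :=
  Pi.single (c (i, false)) 1 - Pi.single (c (i, true)) 1

/-- Each `g i` is a potential of chord `i` on the curve traversed by `σ`: it rises by `1` in the
step from `c (i, false)`, falls by `1` in the step from `c (i, true)`, and is constant otherwise. -/
def IsChordPotential (σ : Perm α) (c : ι × Bool ↪ α) (g : ι → α → R) : Prop :=
  ∀ i, coboundary R σ (g i) = chordBoundary R c i

theorem chordFlip_apply_end [Fintype ι] (c : ι × Bool ↪ α) (i : ι) (b : Bool) :
    chordFlip c (c (i, b)) = c (i, !b) :=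
  Perm.viaFintypeEmbedding_apply_image _ c (i, b)

theorem chordFlip_of_notMem_range [Fintype ι] {c : ι × Bool ↪ α} {x : α}
    (hx : x ∉ Set.range c) : chordFlip c x = x :=
  Perm.viaFintypeEmbedding_apply_notMem_range _ c hx

theorem chordFlip_involutive [Fintype ι] (c : ι × Bool ↪ α) :
    Function.Involutive (chordFlip c) := by
  intro x
  by_cases hx : x ∈ Set.range c
  · obtain ⟨⟨i, b⟩, rfl⟩ := hx
    rw [chordFlip_apply_end, chordFlip_apply_end, Bool.not_not]
  · rw [chordFlip_of_notMem_range hx, chordFlip_of_notMem_range hx]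

theorem sign_chordFlip [Fintype α] [Fintype ι] (c : ι × Bool ↪ α) :
    Perm.sign (chordFlip c) = (-1) ^ Fintype.card ι := by
  classical
  have sign_boolNot : Perm.sign boolNot = -1 := by decide
  rw [chordFlip, Perm.viaFintypeEmbedding_sign, Perm.sign_prodCongrRight, sign_boolNot,
    Finset.prod_const, Finset.card_univ]

theorem chordBoundary_apply_end [DecidableEq ι] (c : ι × Bool ↪ α) (i j : ι) (b : Bool) :
    chordBoundary R c j (c (i, b)) = if i = j then (if b then -1 else 1) else 0 := by
  cases b <;> by_cases hij : i = j <;> simp [chordBoundary, c.injective.eq_iff, hij]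

theorem chordBoundary_of_notMem_range {c : ι × Bool ↪ α} {x : α} (hx : x ∉ Set.range c) (i : ι) :
    chordBoundary R c i x = 0 := by
  have hne (b : Bool) : x ≠ c (i, b) := fun h => hx ⟨(i, b), h.symm⟩
  simp [chordBoundary, hne]

theorem chordBoundary_mul_chordBoundary (c : ι × Bool ↪ α) {i j : ι} (hij : i ≠ j) :
    chordBoundary R c i * chordBoundary R c j = 0 := by
  classical
  ext x
  by_cases hx : x ∈ Set.range c
  · obtain ⟨⟨k, b⟩, rfl⟩ := hx
    by_cases hk : k = i
    · simp [chordBoundary_apply_end, hk, hij]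
    · simp [chordBoundary_apply_end, hk]
  · simp [chordBoundary_of_notMem_range hx]

theorem sum_chordBoundary_mul [Fintype α] (c : ι × Bool ↪ α) (i : ι) (f : α → R) :
    ∑ x, chordBoundary R c i x * f x = -chordDifference R c f i := by
  simp [chordBoundary, chordDifference, sub_mul, Pi.single_apply, LinearMap.funLeft_apply]

theorem sum_chordBoundary [Fintype α] (c : ι × Bool ↪ α) (i : ι) :
    ∑ x, chordBoundary R c i x = 0 := by
  simp [chordBoundary]

theorem apply_chordFlip [Fintype ι] (c : ι × Bool ↪ α) (f : α → R) (x : α) :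
    f (chordFlip c x) =
      f x + Fintype.linearCombination R (chordBoundary R c) (chordDifference R c f) x := by
  classical
  simp only [Fintype.linearCombination_apply, Finset.sum_apply, Pi.smul_apply, smul_eq_mul]
  by_cases hx : x ∈ Set.range c
  · obtain ⟨⟨i, b⟩, rfl⟩ := hx
    cases b <;>
      simp [chordFlip_apply_end, chordBoundary_apply_end, chordDifference, LinearMap.funLeft_apply]
  · simp [chordFlip_of_notMem_range hx, chordBoundary_of_notMem_range hx]

theorem mem_ker_coboundary_mul_chordFlip [Fintype ι] (σ : Perm α) (c : ι × Bool ↪ α)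
    (f : α → R) :
    f ∈ LinearMap.ker (coboundary R (σ * chordFlip c)) ↔
      coboundary R σ f =
        Fintype.linearCombination R (chordBoundary R c) (chordDifference R c f) := by
  have hflip : (∀ x, f ((σ * chordFlip c) x) = f x) ↔ ∀ x, f (σ x) = f (chordFlip c x) := by
    rw [(chordFlip_involutive c).surjective.forall]
    simp only [Perm.mul_apply, chordFlip_involutive c _]
  rw [mem_ker_coboundary, hflip, funext_iff]
  simp only [apply_chordFlip, coboundary_apply, sub_eq_iff_eq_add']

namespace IsChordPotential

variable {σ : Perm α} {c : ι × Bool ↪ α} {g : ι → α → R}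

theorem comp (hg : IsChordPotential σ c g) (e : κ ↪ ι) :
    IsChordPotential σ (subdiagram c e) (g ∘ e) :=
  fun i => hg (e i)

theorem coboundary_linearCombination [Fintype ι] (hg : IsChordPotential σ c g) (v : ι → R) :
    coboundary R σ (Fintype.linearCombination R g v) =
      Fintype.linearCombination R (chordBoundary R c) v := by
  simp only [Fintype.linearCombination_apply, map_sum, map_smul, hg _]

theorem map_chordDifference_ker_coboundary [Fintype ι] [DecidableEq ι]
    (hg : IsChordPotential σ c g) (hσ : orbitCount σ = 1) :
    (LinearMap.ker (coboundary R (σ * chordFlip c))).map (chordDifference R c) =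
      LinearMap.ker (crossingMatrix c g - 1).mulVecLin := by
  ext v
  rw [LinearMap.mem_ker, Matrix.mulVecLin_apply, Matrix.sub_mulVec, Matrix.one_mulVec, sub_eq_zero,
    ← chordDifference_linearCombination]
  constructor
  · rintro ⟨f, hf, rfl⟩
    have hdiff : f - Fintype.linearCombination R g (chordDifference R c f) ∈
        LinearMap.ker (coboundary R σ) := by
      rw [LinearMap.mem_ker, map_sub, hg.coboundary_linearCombination, sub_eq_zero]
      exact (mem_ker_coboundary_mul_chordFlip σ c f).1 hf
    have hzero := chordDifference_eq_zero hσ c hdiff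
    rw [map_sub, sub_eq_zero] at hzero
    exact hzero.symm
  · intro hv
    refine ⟨Fintype.linearCombination R g v, ?_, hv⟩
    exact (mem_ker_coboundary_mul_chordFlip σ c _).2
      ((hg.coboundary_linearCombination v).trans (congrArg _ hv.symm))

theorem crossingMatrix_swap [Finite α] (hg : IsChordPotential σ c g) {i j : ι} (hij : i ≠ j) :
    crossingMatrix c g j i = -crossingMatrix c g i j := by
  have := Fintype.ofFinite α
  have hsum := sum_coboundary σ (g i * g j)
  rw [coboundary_mul, hg, hg, chordBoundary_mul_chordBoundary c hij, add_zero,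
    mul_comm (g i)] at hsum
  simp only [Pi.add_apply, Pi.mul_apply, Finset.sum_add_distrib, sum_chordBoundary_mul] at hsum
  change -crossingMatrix c g i j + -crossingMatrix c g j i = 0 at hsum
  linear_combination -hsum

end IsChordPotential

theorem ker_coboundary_mul_chordFlip_inf_ker_chordDifference [Fintype ι] {σ : Perm α}
    (hσ : orbitCount σ = 1) (c : ι × Bool ↪ α) :
    LinearMap.ker (coboundary R (σ * chordFlip c)) ⊓ LinearMap.ker (chordDifference R c) =
      LinearMap.ker (coboundary R σ) := by
  ext f
  rw [Submodule.mem_inf, mem_ker_coboundary_mul_chordFlip, LinearMap.mem_ker, LinearMap.mem_ker]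
  constructor
  · rintro ⟨hf, hzero⟩
    rw [hf, hzero, map_zero]
  · intro hf
    have hzero := chordDifference_eq_zero hσ c hf
    exact ⟨by rw [hf, hzero, map_zero], hzero⟩

variable {K : Type*} [Field K] [Finite α]

theorem exists_isChordPotential {σ : Perm α} (hσ : orbitCount σ = 1)
    (c : ι × Bool ↪ α) : ∃ g : ι → α → K, IsChordPotential σ c g := by
  have := Fintype.ofFinite α
  choose g hg using fun i => exists_coboundary_eq hσ (sum_chordBoundary (R := K) c i)
  exact ⟨g, hg⟩

namespace IsChordPotential

variable {σ : Perm α} {c : ι × Bool ↪ α} {g : ι → α → K}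

theorem orbitCount_mul_chordFlip [Fintype ι] [DecidableEq ι] (hg : IsChordPotential σ c g)
    (hσ : orbitCount σ = 1) :
    orbitCount (σ * chordFlip c) =
      Module.finrank K (LinearMap.ker (crossingMatrix c g - 1).mulVecLin) + 1 := by
  rw [← finrank_ker_coboundary K (σ * chordFlip c),
    ← finrank_map_add_finrank_inf_ker _ (chordDifference K c),
    hg.map_chordDifference_ker_coboundary hσ,
    ker_coboundary_mul_chordFlip_inf_ker_chordDifference hσ c, finrank_ker_coboundary, hσ]

theorem orbitCount_mul_chordFlip_eq_one_iff [Fintype ι] [DecidableEq ι]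
    (hg : IsChordPotential σ c g) (hσ : orbitCount σ = 1) :
    orbitCount (σ * chordFlip c) = 1 ↔ (crossingMatrix c g - 1).det ≠ 0 := by
  rw [hg.orbitCount_mul_chordFlip hσ, Nat.add_eq_right, Submodule.finrank_eq_zero,
    LinearMap.ker_eq_bot, Matrix.coe_mulVecLin, Matrix.mulVec_injective_iff_isUnit,
    Matrix.isUnit_iff_isUnit_det, isUnit_iff_ne_zero]

theorem crossingMatrix_self (hg : IsChordPotential σ c g) (hσ : orbitCount σ = 1) (i : ι) :
    crossingMatrix c g i i = 1 := by
  have := Fintype.ofFinite α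
  by_contra hne
  have : Nontrivial α := ⟨c (i, false), c (i, true), c.injective.ne (by simp)⟩
  let e : Unit ↪ ι := ⟨fun _ => i, fun _ _ _ => rfl⟩
  have horbit : orbitCount (σ * chordFlip (subdiagram c e)) = 1 := by
    rw [(hg.comp e).orbitCount_mul_chordFlip_eq_one_iff hσ, Matrix.det_unique]
    exact sub_ne_zero.2 hne
  have hsign := sign_of_orbitCount_eq_one horbit
  rw [Perm.sign_mul, sign_chordFlip, sign_of_orbitCount_eq_one hσ, Fintype.card_unit, pow_one,
    mul_neg_one] at hsign
  exact units_ne_neg_self _ hsign.symm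

theorem orbitCount_mul_chordFlip_pair_eq_one_iff (hg : IsChordPotential σ c g)
    (hσ : orbitCount σ = 1) (e : Fin 2 ↪ ι) :
    orbitCount (σ * chordFlip (subdiagram c e)) = 1 ↔ crossingMatrix c g (e 0) (e 1) ≠ 0 := by
  have hdet : (crossingMatrix (subdiagram c e) (g ∘ e) - 1).det =
      crossingMatrix c g (e 0) (e 1) ^ 2 := by
    have hswap := hg.crossingMatrix_swap (e.injective.ne zero_ne_one)
    simp [crossingMatrix_subdiagram, Matrix.det_fin_two, hg.crossingMatrix_self hσ, hswap, sq]
  rw [(hg.comp e).orbitCount_mul_chordFlip_eq_one_iff hσ, hdet, pow_ne_zero_iff two_ne_zero]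

end IsChordPotential

end ChordDiagram

section RibbonGraph

variable {n : ℕ}

theorem flipOn_apply (H : Finset (Fin n)) (x : HalfEdge n) :
    flipOn n H x = if x.1 ∈ H then (x.1, !x.2) else x :=
  rfl

theorem flipOn_mul_flipOn (A B : Finset (Fin n)) :
    flipOn n A * flipOn n B = flipOn n (symmDiff A B) := by
  ext1 x
  by_cases hA : x.1 ∈ A <;> by_cases hB : x.1 ∈ B <;>
    simp [flipOn_apply, Finset.mem_symmDiff, hA, hB]

theorem flipOn_empty : flipOn n ∅ = 1 := by
  ext1 x
  simp [flipOn_apply]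

theorem flipOn_map_univ {ι : Type*} [Fintype ι] (e : ι ↪ Fin n) :
    flipOn n (Finset.univ.map e) = chordFlip (subdiagram (.refl (HalfEdge n)) e) := by
  ext1 x
  by_cases hx : x ∈ Set.range (subdiagram (.refl (HalfEdge n)) e)
  · obtain ⟨⟨i, b⟩, rfl⟩ := hx
    rw [chordFlip_apply_end]
    simp [flipOn_apply, subdiagram]
  · have hx' : x.1 ∉ Finset.univ.map e := by
      simp only [Finset.mem_map, Finset.mem_univ, true_and]
      rintro ⟨i, hi⟩
      exact hx ⟨(i, x.2), Prod.ext hi rfl⟩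
    rw [chordFlip_of_notMem_range hx, flipOn_apply, if_neg hx']

theorem faceCount_symmDiff (σ₀ : Perm (HalfEdge n)) (Q H : Finset (Fin n)) :
    faceCount σ₀ (symmDiff Q H) = orbitCount (σ₀ * flipOn n Q * flipOn n H) := by
  rw [faceCount, mul_assoc, flipOn_mul_flipOn]

theorem faceCount_empty (σ₀ : Perm (HalfEdge n)) : faceCount σ₀ ∅ = orbitCount σ₀ := by
  rw [faceCount, flipOn_empty, mul_one]

variable {σ₀ : Perm (HalfEdge n)} {Q : Finset (Fin n)}

theorem chordsIntersect_iff {K : Type*} [Field K] {g : Fin n → HalfEdge n → K}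
    (hQ : faceCount σ₀ Q = 1)
    (hg : IsChordPotential (σ₀ * flipOn n Q) (.refl (HalfEdge n)) g) {i j : Fin n} :
    chordsIntersect σ₀ Q i j ↔ i ≠ j ∧ crossingMatrix (.refl (HalfEdge n)) g i j ≠ 0 := by
  refine and_congr_right fun hij => ?_
  let e : Fin 2 ↪ Fin n := ⟨![i, j], injective_pair_iff_ne.2 hij⟩
  have hpair : ({i, j} : Finset (Fin n)) = Finset.univ.map e := by
    ext k
    simp [e, eq_comm]
  rw [faceCount_symmDiff, hpair, flipOn_map_univ, hg.orbitCount_mul_chordFlip_pair_eq_one_iff hQ]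
  rfl

theorem intersectionMatrix_apply (σ₀ : Perm (HalfEdge n)) (Q : Finset (Fin n)) (i j : Q)
    [Decidable (chordsIntersect σ₀ Q i j)] :
    intersectionMatrix σ₀ Q i j = if chordsIntersect σ₀ Q i j then 1 else 0 := by
  simp only [intersectionMatrix, chordsIntersect]
  congr

theorem intersectionMatrix_eq_submatrix_sub_one {g : Fin n → HalfEdge n → ZMod 2}
    (hQ : faceCount σ₀ Q = 1)
    (hg : IsChordPotential (σ₀ * flipOn n Q) (.refl (HalfEdge n)) g) :
    intersectionMatrix σ₀ Q =
      (crossingMatrix (.refl (HalfEdge n)) g).submatrix (↑) (↑) - 1 := by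
  classical
  have ite_ne_zero (a : ZMod 2) : (if a ≠ 0 then 1 else 0) = a := by decide +revert
  ext i j
  rw [intersectionMatrix_apply, chordsIntersect_iff hQ hg]
  by_cases hij : i = j
  · simp [hij, hg.crossingMatrix_self hQ]
  · simpa [hij, Subtype.coe_inj] using ite_ne_zero _

theorem orbitCount_eq_finrank_ker_intersectionMatrix_add_one (hQ : faceCount σ₀ Q = 1) :
    orbitCount σ₀ =
      Module.finrank (ZMod 2) (LinearMap.ker (intersectionMatrix σ₀ Q).mulVecLin) + 1 := by
  obtain ⟨g, hg⟩ := exists_isChordPotential (K := ZMod 2) hQ (.refl (HalfEdge n))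
  have hchords : flipOn n Q =
      chordFlip (subdiagram (.refl (HalfEdge n)) (.subtype (· ∈ Q))) := by
    rw [← flipOn_map_univ, Finset.univ_eq_attach, Finset.attach_map_val]
  rw [← faceCount_empty, ← Finset.bot_eq_empty, ← symmDiff_self Q, faceCount_symmDiff,
    intersectionMatrix_eq_submatrix_sub_one hQ hg]
  nth_rw 2 [hchords]
  exact (hg.comp _).orbitCount_mul_chordFlip hQ

end RibbonGraph

/-- Bollobás–Riordan: the genus of a quasi-tree `ℚ` (with `g(ℚ) = (1 - V(𝔾) + E(ℚ))/2`)
is half the rank over `𝔽₂` of the adjacency matrix of the intersection graph of the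
chords of `C_ℚ` corresponding to edges of `ℚ`. -/
theorem genus_eq_half_rank {n : ℕ} (σ₀ : Equiv.Perm (HalfEdge n))
    (Q : Finset (Fin n)) (hQ : faceCount σ₀ Q = 1) :
    ((intersectionMatrix σ₀ Q).rank : ℤ) = 1 - (orbitCount σ₀ : ℤ) + Q.card := by
  have hrank := LinearMap.finrank_range_add_finrank_ker (intersectionMatrix σ₀ Q).mulVecLin
  rw [Module.finrank_fintype_fun_eq_card, Fintype.card_coe] at hrank
  have hV := orbitCount_eq_finrank_ker_intersectionMatrix_add_one hQ
  rw [Matrix.rank]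
  lia
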